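/- For every fixed h > 0, the function R ↦ Δφ(h, R) is strictly decreasing on [0, ∞): for all 0 ≤ R₁ < R₂ one has Δφ(h, R₁) > Δφ(h, R₂). -/

import Mathlib

open Filter Topology intervalIntegral

/-- The change `Δφ(h, R)` of the polar angle of the generating curve of a constant mean
curvature (`H = −1`) helicoidal surface of pitch `h` over one full excursion between the
boundaries of the annulus `|R − 1| ≤ |X| ≤ R + 1`. -/
noncomputable def deltaPhi (h R : ℝ) : ℝ :=
  ∫ u in (-Real.pi)..Real.pi,
    Real.sqrt (R ^ 2 + 1 + 2 * R * Real.sin u + h ^ 2) * (1 + R * Real.sin u) /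
      (h * (R ^ 2 + 1 + 2 * R * Real.sin u))

noncomputable def gAux (h s R : ℝ) : ℝ :=
  (1 + R * s) / (Real.sqrt (R ^ 2 + 1 + 2 * R * s + h ^ 2) + h)

lemma A_nonneg (R s : ℝ) (hs : s ^ 2 ≤ 1) : 0 ≤ R ^ 2 + 1 + 2 * R * s := by
  nlinarith [sq_nonneg (1 + R * s), sq_nonneg R, mul_nonneg (sq_nonneg R) (sub_nonneg.2 hs)]

lemma gAux_hasDerivAt (h s R : ℝ) (hh : 0 < h) (hs : s ^ 2 ≤ 1) (q : ℝ)
    (hq : q = Real.sqrt (R ^ 2 + 1 + 2 * R * s + h ^ 2)) :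
    HasDerivAt (gAux h s) (h * s / (q * (q + h)) - R * (1 - s ^ 2) / (q * (q + h) ^ 2)) R := by
  have hA := A_nonneg R s hs
  have hB : 0 < R ^ 2 + 1 + 2 * R * s + h ^ 2 := by positivity
  have hq0 : 0 < q := hq ▸ Real.sqrt_pos.2 hB
  have hq2 : q ^ 2 = R ^ 2 + 1 + 2 * R * s + h ^ 2 := by rw [hq, Real.sq_sqrt hB.le]
  have h1 : HasDerivAt (fun R : ℝ => R ^ 2 + 1 + 2 * R * s + h ^ 2) (2 * R + 2 * s) R := by
    have := (((hasDerivAt_pow 2 R).add_const 1).add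
      (((hasDerivAt_id R).const_mul 2).mul_const s)).add_const (h ^ 2)
    refine HasDerivAt.congr_deriv this ?_
    simp
  have h2 := (h1.sqrt hB.ne').add_const h
  have h3 : HasDerivAt (fun R : ℝ => 1 + R * s) s R := by
    have := ((hasDerivAt_id R).mul_const s).const_add 1
    refine HasDerivAt.congr_deriv this ?_
    simp
  have h4 := h3.div h2 (by rw [← hq]; positivity)
  rw [← hq] at h4
  refine HasDerivAt.congr_deriv h4 ?_
  symm
  have : (q + h) ≠ 0 := by positivity
  have := hq0.ne'
  field_simp
  have e : (q - h) * (q + h) = R ^ 2 + 1 + 2 * R * s := by nlinarith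
  linear_combination (-s) * hq2

lemma term_nonpos (h s R : ℝ) (hh : 0 < h) (hR : 0 ≤ R) (hs0 : 0 ≤ s) (hs : s ^ 2 ≤ 1)
    (q p : ℝ) (hp : 0 < p) (hpq : p ≤ q) :
    (h * s / (q * (q + h)) - R * (1 - s ^ 2) / (q * (q + h) ^ 2)) +
    (h * (-s) / (p * (p + h)) - R * (1 - (-s) ^ 2) / (p * (p + h) ^ 2)) ≤ 0 := by
  have hq : 0 < q := hp.trans_le hpq
  have h1 : h * s / (q * (q + h)) ≤ h * s / (p * (p + h)) := by gcongr
  have h2 : 0 ≤ R * (1 - s ^ 2) / (q * (q + h) ^ 2) := by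
    have : 0 ≤ 1 - s ^ 2 := by linarith
    positivity
  have h3 : 0 ≤ R * (1 - s ^ 2) / (p * (p + h) ^ 2) := by
    have : 0 ≤ 1 - s ^ 2 := by linarith
    positivity
  have h4 : h * (-s) / (p * (p + h)) = - (h * s / (p * (p + h))) := by ring
  rw [h4, neg_sq]
  linarith

lemma fold_anti_nonneg (h s : ℝ) (hh : 0 < h) (hs0 : 0 ≤ s) (hs : s ^ 2 ≤ 1) :
    AntitoneOn (fun R => gAux h s R + gAux h (-s) R) (Set.Ici 0) := by
  have hs' : (-s) ^ 2 ≤ 1 := by simpa using hs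
  have hd := fun R => (gAux_hasDerivAt h s R hh hs _ rfl).add
    (gAux_hasDerivAt h (-s) R hh hs' _ rfl)
  refine antitoneOn_of_deriv_nonpos (convex_Ici 0)
    (fun R _ => (hd R).continuousAt.continuousWithinAt)
    (fun R _ => (hd R).differentiableAt.differentiableWithinAt) ?_
  intro R hR
  rw [interior_Ici] at hR
  have hR : 0 < R := hR
  have e := (hd R).deriv
  have hn := term_nonpos h s R hh hR.le hs0 hs
    (Real.sqrt (R ^ 2 + 1 + 2 * R * s + h ^ 2)) (Real.sqrt (R ^ 2 + 1 + 2 * R * (-s) + h ^ 2))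
    (Real.sqrt_pos.2 (by have := A_nonneg R (-s) hs'; positivity))
    (Real.sqrt_le_sqrt (by nlinarith [mul_nonneg hR.le hs0]))
  exact e.trans_le hn

lemma fold_anti (h s : ℝ) (hh : 0 < h) (hs : s ^ 2 ≤ 1) :
    AntitoneOn (fun R => gAux h s R + gAux h (-s) R) (Set.Ici 0) := by
  rcases le_total 0 s with h0 | h0
  · exact fold_anti_nonneg h s hh h0 hs
  · have := fold_anti_nonneg h (-s) hh (by linarith) (by simpa using hs)
    simpa [add_comm] using this

lemma gAux_cont (h R : ℝ) (hh : 0 < h) : Continuous (fun u : ℝ => gAux h (Real.sin u) R) := by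
  unfold gAux
  refine Continuous.div (by fun_prop) (by fun_prop) (fun u => ?_)
  have := Real.sqrt_nonneg (R ^ 2 + 1 + 2 * R * Real.sin u + h ^ 2)
  positivity

lemma G_fold (h R : ℝ) (hh : 0 < h) :
    2 * ∫ u in (-Real.pi)..Real.pi, gAux h (Real.sin u) R =
    ∫ u in (-Real.pi)..Real.pi, (gAux h (Real.sin u) R + gAux h (-Real.sin u) R) := by
  have hc := gAux_cont h R hh
  have hc' : Continuous (fun u : ℝ => gAux h (-Real.sin u) R) := by
    have := hc.comp continuous_neg
    simpa [Function.comp_def] using this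
  rw [intervalIntegral.integral_add (hc.intervalIntegrable _ _) (hc'.intervalIntegrable _ _)]
  have := intervalIntegral.integral_comp_neg (a := -Real.pi) (b := Real.pi)
    (fun u : ℝ => gAux h (Real.sin u) R)
  simp only [Real.sin_neg, neg_neg] at this
  rw [this]; ring

lemma G_strictAnti (h R₁ R₂ : ℝ) (hh : 0 < h) (h1 : 0 ≤ R₁) (h12 : R₁ < R₂) :
    ∫ u in (-Real.pi)..Real.pi, gAux h (Real.sin u) R₂ <
    ∫ u in (-Real.pi)..Real.pi, gAux h (Real.sin u) R₁ := by
  have hc' : ∀ R, Continuous (fun u : ℝ => gAux h (Real.sin u) R + gAux h (-Real.sin u) R) := by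
    intro R
    have hc := gAux_cont h R hh
    have := hc.comp continuous_neg
    simp only [Function.comp_def, Real.sin_neg] at this
    exact hc.add this
  have key : ∫ u in (-Real.pi)..Real.pi, (gAux h (Real.sin u) R₂ + gAux h (-Real.sin u) R₂) <
      ∫ u in (-Real.pi)..Real.pi, (gAux h (Real.sin u) R₁ + gAux h (-Real.sin u) R₁) := by
    have hpi := Real.pi_pos
    refine intervalIntegral.integral_lt_integral_of_continuousOn_of_le_of_exists_lt
      (by linarith) (hc' R₂).continuousOn (hc' R₁).continuousOn ?_ ?_
    · intro u _
      exact fold_anti h (Real.sin u) hh (Real.sin_sq_le_one u) h1 (h1.trans h12.le) h12.le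
    · refine ⟨0, ⟨by linarith, hpi.le⟩, ?_⟩
      have : gAux h 0 R₂ < gAux h 0 R₁ := by
        simp only [gAux, mul_zero, add_zero]
        have : Real.sqrt (R₁ ^ 2 + 1 + h ^ 2) < Real.sqrt (R₂ ^ 2 + 1 + h ^ 2) :=
          Real.sqrt_lt_sqrt (by positivity) (by nlinarith)
        have h0 := Real.sqrt_nonneg (R₁ ^ 2 + 1 + h ^ 2)
        exact one_div_lt_one_div_of_lt (by positivity) (by linarith)
      simpa using add_lt_add this this
  rw [← G_fold h R₁ hh, ← G_fold h R₂ hh] at key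
  linarith

lemma A_pos (R : ℝ) (hR0 : 0 ≤ R) (hR : R ≠ 1) (u : ℝ) :
    0 < R ^ 2 + 1 + 2 * R * Real.sin u := by
  have : 0 < (R - 1) ^ 2 := by have := sub_ne_zero.2 hR; positivity
  nlinarith [Real.neg_one_le_sin u]

lemma K_cont (R : ℝ) (hR0 : 0 ≤ R) (hR : R ≠ 1) :
    Continuous (fun u => (1 + R * Real.sin u) / (R ^ 2 + 1 + 2 * R * Real.sin u)) :=
  Continuous.div (by fun_prop) (by fun_prop) (fun u => (A_pos R hR0 hR u).ne')

lemma K_lt (R : ℝ) (hR0 : 0 ≤ R) (hR : R < 1) :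
    ∫ u in (-Real.pi)..Real.pi, (1 + R * Real.sin u) / (R ^ 2 + 1 + 2 * R * Real.sin u)
      = 2 * Real.pi := by
  have hd : ∀ u : ℝ, HasDerivAt
      (fun u => u + Real.arctan (R * Real.cos u / (1 + R * Real.sin u)))
      ((1 + R * Real.sin u) / (R ^ 2 + 1 + 2 * R * Real.sin u)) u := by
    intro u
    have hp : 0 < 1 + R * Real.sin u := by nlinarith [Real.neg_one_le_sin u]
    have hA := A_pos R hR0 hR.ne u
    have h1 := (((Real.hasDerivAt_cos u).const_mul R).div
      (((Real.hasDerivAt_sin u).const_mul R).const_add 1) hp.ne').arctan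
    refine HasDerivAt.congr_deriv ((hasDerivAt_id u).add h1) ?_
    symm
    have e : 1 + (R * Real.cos u / (1 + R * Real.sin u)) ^ 2 =
        (R ^ 2 + 1 + 2 * R * Real.sin u) / (1 + R * Real.sin u) ^ 2 := by
      field_simp
      linear_combination R ^ 2 * Real.sin_sq_add_cos_sq u
    simp only [Pi.div_apply]
    rw [e]
    have gen : ∀ A p N : ℝ, A ≠ 0 → p ≠ 0 → p = A + N →
        p / A = 1 + 1 / (A / p ^ 2) * (N / p ^ 2) := by
      intro A p N hA hp hN
      field_simp
      exact hN
    refine gen _ _ _ hA.ne' hp.ne' ?_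
    linear_combination R ^ 2 * Real.sin_sq_add_cos_sq u
  rw [intervalIntegral.integral_eq_sub_of_hasDerivAt (fun u _ => hd u)
    ((K_cont R hR0 hR.ne).intervalIntegrable _ _)]
  simp
  ring

lemma K_gt (R : ℝ) (hR : 1 < R) :
    ∫ u in (-Real.pi)..Real.pi, (1 + R * Real.sin u) / (R ^ 2 + 1 + 2 * R * Real.sin u)
      = 0 := by
  have hR0 : 0 < R := by linarith
  have hi : R⁻¹ < 1 := inv_lt_one_of_one_lt₀ hR
  have e : ∀ u : ℝ, (1 + R * Real.sin u) / (R ^ 2 + 1 + 2 * R * Real.sin u) =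
      1 - (1 + R⁻¹ * Real.sin u) / (R⁻¹ ^ 2 + 1 + 2 * R⁻¹ * Real.sin u) := by
    intro u
    have h1 := A_pos R hR0.le hR.ne' u
    have e2 : R⁻¹ ^ 2 + 1 + 2 * R⁻¹ * Real.sin u =
      (R ^ 2 + 1 + 2 * R * Real.sin u) / R ^ 2 := by field_simp; ring
    rw [e2]
    have h1' := h1.ne'
    rw [div_div_eq_mul_div, eq_sub_iff_add_eq, ← add_div, div_eq_one_iff_eq h1']
    field_simp
    ring
  simp_rw [e]
  rw [intervalIntegral.integral_sub (by simp)
    ((K_cont R⁻¹ (by positivity) hi.ne).intervalIntegrable _ _), K_lt _ (by positivity) hi]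
  simp
  ring

lemma split_pt (h R s : ℝ) (hh : 0 < h) (hA : 0 < R ^ 2 + 1 + 2 * R * s) :
    Real.sqrt (R ^ 2 + 1 + 2 * R * s + h ^ 2) * (1 + R * s) / (h * (R ^ 2 + 1 + 2 * R * s))
    = (1 + R * s) / (R ^ 2 + 1 + 2 * R * s) + h⁻¹ * gAux h s R := by
  unfold gAux
  have h2 := Real.sq_sqrt (by positivity : 0 ≤ R ^ 2 + 1 + 2 * R * s + h ^ 2)
  have h3 := Real.sqrt_nonneg (R ^ 2 + 1 + 2 * R * s + h ^ 2)
  set q := Real.sqrt (R ^ 2 + 1 + 2 * R * s + h ^ 2)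
  have : q + h ≠ 0 := by positivity
  generalize R ^ 2 + 1 + 2 * R * s = A at *
  have := hA.ne'
  field_simp
  linear_combination (1 + R * s) * h2

lemma delta_ne (h R : ℝ) (hh : 0 < h) (hR0 : 0 ≤ R) (hR : R ≠ 1) :
    deltaPhi h R =
      (∫ u in (-Real.pi)..Real.pi, (1 + R * Real.sin u) / (R ^ 2 + 1 + 2 * R * Real.sin u))
      + h⁻¹ * ∫ u in (-Real.pi)..Real.pi, gAux h (Real.sin u) R := by
  unfold deltaPhi
  rw [← intervalIntegral.integral_const_mul, ← intervalIntegral.integral_add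
    ((K_cont R hR0 hR).intervalIntegrable _ _)
    (((gAux_cont h R hh).const_mul _).intervalIntegrable _ _)]
  exact intervalIntegral.integral_congr
    (fun u _ => split_pt h R (Real.sin u) hh (A_pos R hR0 hR u))

lemma delta_one (h : ℝ) (hh : 0 < h) :
    deltaPhi h 1 = Real.pi + h⁻¹ * ∫ u in (-Real.pi)..Real.pi, gAux h (Real.sin u) 1 := by
  have e : Real.pi = ∫ u in (-Real.pi)..Real.pi, (1 / 2 : ℝ) := by simp; ring
  have e2 : deltaPhi h 1 =
      ∫ u in (-Real.pi)..Real.pi, ((1 / 2 : ℝ) + h⁻¹ * gAux h (Real.sin u) 1) := by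
    unfold deltaPhi
    refine intervalIntegral.integral_congr_ae ?_
    have hc : (Set.range (fun k : ℤ => -(Real.pi / 2) + k * (2 * Real.pi))).Countable :=
      Set.countable_range _
    filter_upwards [hc.ae_notMem MeasureTheory.volume] with u hu _
    have hs : Real.sin u ≠ -1 := by
      intro hs
      obtain ⟨k, hk⟩ := Real.sin_eq_neg_one_iff.1 hs
      exact hu ⟨k, hk⟩
    have hs' : -1 < Real.sin u := lt_of_le_of_ne (Real.neg_one_le_sin u) hs.symm
    have hA : 0 < (1:ℝ) ^ 2 + 1 + 2 * 1 * Real.sin u := by linarith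
    rw [split_pt h 1 (Real.sin u) hh hA]
    congr 1
    rw [div_eq_div_iff hA.ne' two_ne_zero]
    ring
  rw [e2, intervalIntegral.integral_add (by simp)
    (((gAux_cont h 1 hh).const_mul _).intervalIntegrable _ _), ← e,
    intervalIntegral.integral_const_mul]

noncomputable def pAux (R : ℝ) : ℝ := if R < 1 then 2 * Real.pi else if R = 1 then Real.pi else 0

lemma delta_eq (h R : ℝ) (hh : 0 < h) (hR0 : 0 ≤ R) :
    deltaPhi h R = pAux R + h⁻¹ * ∫ u in (-Real.pi)..Real.pi, gAux h (Real.sin u) R := by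
  unfold pAux
  rcases lt_trichotomy R 1 with hR | hR | hR
  · rw [delta_ne h R hh hR0 hR.ne, K_lt R hR0 hR, if_pos hR]
  · subst hR
    rw [delta_one h hh]; simp
  · rw [delta_ne h R hh hR0 hR.ne', K_gt R hR, if_neg hR.not_gt, if_neg hR.ne']

/-- Lemma 6.5. For every fixed `h > 0`, the function `R ↦ Δφ(h, R)`
is strictly decreasing on `[0, ∞)`. -/
theorem deltaPhi_strictAnti (h : ℝ) (hh : 0 < h) :
    StrictAntiOn (fun R => deltaPhi h R) (Set.Ici 0) := by
  intro R₁ h1 R₂ h2 h12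
  have h1 : 0 ≤ R₁ := h1
  have h2 : 0 ≤ R₂ := h2
  show deltaPhi h R₂ < deltaPhi h R₁
  rw [delta_eq h R₁ hh h1, delta_eq h R₂ hh h2]
  have hG := mul_lt_mul_of_pos_left (G_strictAnti h R₁ R₂ hh h1 h12) (inv_pos.2 hh)
  have hP : pAux R₂ ≤ pAux R₁ := by
    have := Real.pi_pos
    unfold pAux
    split_ifs <;> linarith
  linarith
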